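/- arXiv:0802.4156 — 2 statements merged into one kernel-verified Lean document; each statement's English description precedes it below -/
import Mathlib

section
/- Let A be a real κ×κ matrix all of whose complex eigenvalues have negative real part (A is Hurwitz). Then there exists a symmetric positive definite real κ×κ matrix P such that the matrix −(AᵀP + PA) is positive definite; equivalently, the quadratic form W(z) = zᵀPz satisfies ∇W(z)·(Az) < 0 for all z ≠ 0. -/
open scoped BigOperators Matrix

/-!
The Cayley transform `b = (1 + a)(1 - a)⁻¹` carries the open left half-plane to the open unit disc,
so the spectral radius of `b` is less than `1` and, by Gelfand's formula, some power of `b` is a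
strict contraction: `‖b ^ N‖ < 1`. Then `p = ∑ k < N, (b ^ k)⋆ b ^ k` is at least `1`, and
`p - b⋆ p b` telescopes to `1 - (b ^ N)⋆ b ^ N`, which is strictly positive. Conjugating
`p - b⋆ p b` by `1 - a` gives `-2 (a⋆ p + p a)`. All this takes place in an arbitrary C⋆-algebra;
for a real matrix, the entrywise real part of the complex solution `p` is again a solution.
-/

section CayleyTransform

variable {R : Type*} [Ring R] {a : R}

/-- The Cayley transform `(1 + a)(1 - a)⁻¹` of a ring element, used to turn a spectrum in the open
left half-plane into one in the open unit disc. It takes the junk value `0` when `1 - a` is not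
invertible. -/
noncomputable def cayleyTransform (a : R) : R :=
  (1 + a) * Ring.inverse (1 - a)

lemma cayleyTransform_mul_one_sub (ha : IsUnit (1 - a)) :
    cayleyTransform a * (1 - a) = 1 + a := by
  rw [cayleyTransform, mul_assoc, Ring.inverse_mul_cancel _ ha, mul_one]

lemma star_one_sub_mul_stein_mul_one_sub [StarRing R] (ha : IsUnit (1 - a)) (p : R) :
    star (1 - a) * (p - star (cayleyTransform a) * p * cayleyTransform a) * (1 - a) =
      -(star a * (2 * p) + 2 * p * a) := by
  set b := cayleyTransform a
  calc star (1 - a) * (p - star b * p * b) * (1 - a)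
      = star (1 - a) * p * (1 - a) - star (b * (1 - a)) * p * (b * (1 - a)) := by
        rw [star_mul]; noncomm_ring
    _ = star (1 - a) * p * (1 - a) - star (1 + a) * p * (1 + a) := by
        rw [cayleyTransform_mul_one_sub ha]
    _ = -(star a * (2 * p) + 2 * p * a) := by
        rw [star_sub, star_add, star_one]; noncomm_ring

lemma sub_one_div_add_one_mem_spectrum {𝕜 : Type*} [Field 𝕜] [NeZero (2 : 𝕜)] [Algebra 𝕜 R]
    (ha : IsUnit (1 - a)) {z : 𝕜} (hz : z ∈ spectrum 𝕜 (cayleyTransform a)) :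
    (z - 1) / (z + 1) ∈ spectrum 𝕜 a := by
  have hmul : (algebraMap 𝕜 R z - cayleyTransform a) * (1 - a) =
      algebraMap 𝕜 R (z - 1) - (z + 1) • a := by
    rw [sub_mul, cayleyTransform_mul_one_sub ha, Algebra.smul_def, map_sub, map_add, map_one]
    noncomm_ring
  have hnot : ¬ IsUnit (algebraMap 𝕜 R (z - 1) - (z + 1) • a) := by
    rwa [← hmul, ← ha.unit_spec, Units.isUnit_mul_units]
  have hz₁ : z + 1 ≠ 0 := by
    intro h
    refine hnot ?_
    rw [h, zero_smul, sub_zero, show z - 1 = -2 by linear_combination h]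
    exact (neg_ne_zero.2 two_ne_zero).isUnit.map (algebraMap 𝕜 R)
  rw [spectrum.mem_iff]
  contrapose hnot
  have hsmul := hnot.smul (Units.mk0 (z + 1) hz₁)
  rwa [Units.smul_mk0, smul_sub, ← algebraMap.coe_smul, smul_eq_mul, mul_div_cancel₀ _ hz₁]
    at hsmul

lemma isUnit_one_sub_of_spectrum_re_neg [Algebra ℂ R] (ha : ∀ z ∈ spectrum ℂ a, z.re < 0) :
    IsUnit (1 - a) := by
  have h : (1 : ℂ) ∉ spectrum ℂ a := fun h ↦ (ha 1 h).not_ge zero_le_one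
  rwa [spectrum.notMem_iff, map_one] at h

end CayleyTransform

lemma norm_lt_one_of_re_sub_one_div_add_one_neg {z : ℂ} (hz : ((z - 1) / (z + 1)).re < 0) :
    ‖z‖ < 1 := by
  have hre : ((z - 1) / (z + 1)).re = (‖z‖ ^ 2 - 1) / Complex.normSq (z + 1) := by
    rw [Complex.div_re, ← add_div, ← Complex.normSq_eq_norm_sq, Complex.normSq_apply z]
    congr 1
    simp only [Complex.sub_re, Complex.add_re, Complex.one_re, Complex.sub_im, Complex.add_im,
      Complex.one_im]
    ring
  rw [hre] at hz
  have hsq : ‖z‖ ^ 2 - 1 < 0 := neg_of_div_neg_left hz (Complex.normSq_nonneg _)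
  rwa [sub_neg, sq_lt_one_iff₀ (norm_nonneg z)] at hsq

section BanachAlgebra

variable {A : Type*} [NormedRing A] [NormedAlgebra ℂ A] [CompleteSpace A] {a : A}

lemma spectralRadius_cayleyTransform_lt_one (ha : ∀ z ∈ spectrum ℂ a, z.re < 0) :
    spectralRadius ℂ (cayleyTransform a) < 1 := by
  nontriviality A
  refine spectrum.spectralRadius_lt_of_forall_lt _ fun z hz ↦ ?_
  have hunit := isUnit_one_sub_of_spectrum_re_neg ha
  exact norm_lt_one_of_re_sub_one_div_add_one_neg
    (ha _ (sub_one_div_add_one_mem_spectrum hunit hz))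

lemma exists_norm_pow_lt_one (ha : spectralRadius ℂ a < 1) : ∃ N ≠ 0, ‖a ^ N‖ < 1 := by
  have hroot :=
    (spectrum.pow_nnnorm_pow_one_div_tendsto_nhds_spectralRadius a).eventually_lt_const ha
  obtain ⟨N, hN, hN₀⟩ := (hroot.and (Filter.eventually_ne_atTop 0)).exists
  refine ⟨N, hN₀, ?_⟩
  contrapose! hN
  exact ENNReal.one_le_rpow (mod_cast hN) (by positivity)

end BanachAlgebra

section SteinSum

variable {R : Type*} [Semiring R] [StarRing R]

/-- The partial sum `∑ k < N, (b ^ k)⋆ b ^ k` of the series that formally solves the Stein equation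
`p - b⋆ p b = 1`; if `b ^ N` is a strict contraction, it already makes `p - b⋆ p b` strictly
positive. -/
def steinSum (b : R) (N : ℕ) : R :=
  ∑ k ∈ Finset.range N, star (b ^ k) * b ^ k

lemma one_le_steinSum [PartialOrder R] [StarOrderedRing R] (b : R) {N : ℕ} (hN : N ≠ 0) :
    1 ≤ steinSum b N := by
  simpa [steinSum] using Finset.single_le_sum (fun k _ ↦ star_mul_self_nonneg (b ^ k))
    (Finset.mem_range.2 (Nat.pos_of_ne_zero hN))

lemma steinSum_sub_star_mul_steinSum_mul {R : Type*} [Ring R] [StarRing R] (b : R) (N : ℕ) :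
    steinSum b N - star b * steinSum b N * b = 1 - star (b ^ N) * b ^ N := by
  have hshift : star b * steinSum b N * b =
      ∑ k ∈ Finset.range N, star (b ^ (k + 1)) * b ^ (k + 1) := by
    simp only [steinSum, Finset.mul_sum, Finset.sum_mul, pow_succ, star_mul, mul_assoc]
  rw [hshift, steinSum, ← Finset.sum_sub_distrib,
    Finset.sum_range_sub' fun k ↦ star (b ^ k) * b ^ k, pow_zero, star_one, one_mul]

end SteinSum

section CStarAlgebra

variable {A : Type*} [CStarAlgebra A] [PartialOrder A] [StarOrderedRing A]

lemma isStrictlyPositive_one_sub_star_mul_self {a : A} (ha : ‖a‖ < 1) :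
    IsStrictlyPositive (1 - star a * a) := by
  have hpos : 0 < 1 - ‖a‖ ^ 2 := sub_pos.2 ((sq_lt_one_iff₀ (norm_nonneg a)).2 ha)
  refine (isStrictlyPositive_algebraMap (A := A) hpos).of_le ?_
  rw [map_sub, map_one]
  exact sub_le_sub_left CStarAlgebra.star_mul_le_algebraMap_norm_sq 1

theorem exists_isStrictlyPositive_sub_star_mul_mul {b : A} (hb : spectralRadius ℂ b < 1) :
    ∃ p : A, IsStrictlyPositive p ∧ IsStrictlyPositive (p - star b * p * b) := by
  obtain ⟨N, hN₀, hN⟩ := exists_norm_pow_lt_one hb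
  refine ⟨steinSum b N, isStrictlyPositive_one.of_le (one_le_steinSum b hN₀), ?_⟩
  rw [steinSum_sub_star_mul_steinSum_mul]
  exact isStrictlyPositive_one_sub_star_mul_self hN

theorem exists_isStrictlyPositive_neg_star_mul_add_mul {a : A}
    (ha : ∀ z ∈ spectrum ℂ a, z.re < 0) :
    ∃ p : A, IsStrictlyPositive p ∧ IsStrictlyPositive (-(star a * p + p * a)) := by
  obtain ⟨p, hp, hstein⟩ :=
    exists_isStrictlyPositive_sub_star_mul_mul (spectralRadius_cayleyTransform_lt_one ha)
  have hunit := isUnit_one_sub_of_spectrum_re_neg ha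
  refine ⟨2 * p, two_mul p ▸ hp.add_nonneg hp.nonneg, ?_⟩
  rw [← star_one_sub_mul_stein_mul_one_sub hunit]
  exact hunit.isStrictlyPositive_star_left_conjugate_iff.2 hstein

end CStarAlgebra

section RealPart

variable {l m n 𝕜 : Type*} [RCLike 𝕜]

lemma map_re_map_algebraMap_mul [Fintype m] (A : Matrix l m ℝ) (P : Matrix m n 𝕜) :
    (A.map (algebraMap ℝ 𝕜) * P).map RCLike.re = A * P.map RCLike.re := by
  ext i j
  simp [Matrix.mul_apply]

lemma map_re_mul_map_algebraMap [Fintype m] (P : Matrix l m 𝕜) (A : Matrix m n ℝ) :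
    (P * A.map (algebraMap ℝ 𝕜)).map RCLike.re = P.map RCLike.re * A := by
  ext i j
  simp [Matrix.mul_apply]

open scoped ComplexOrder in
lemma posDef_map_re {P : Matrix n n 𝕜} (hP : P.PosDef) :
    (P.map RCLike.re : Matrix n n ℝ).PosDef := by
  refine ⟨?_, fun x hx ↦ ?_⟩
  · ext i j
    simp [← hP.isHermitian.apply i j]
  · have hpos := (RCLike.pos_iff.1 (hP.2 (x := x.mapRange (↑) RCLike.ofReal_zero)
      (by simpa [Finsupp.ext_iff] using hx))).1
    simpa [Finsupp.sum, Finsupp.support_mapRange_of_injective _ _ RCLike.ofReal_injective]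
      using hpos

end RealPart

open scoped ComplexOrder MatrixOrder Matrix.Norms.L2Operator in
lemma exists_posDef_neg_conjTranspose_mul_add_mul {n : Type*} [Fintype n] [DecidableEq n]
    {A : Matrix n n ℂ} (hA : ∀ μ, A.charpoly.IsRoot μ → μ.re < 0) :
    ∃ P : Matrix n n ℂ, P.PosDef ∧ (-(Aᴴ * P + P * A)).PosDef := by
  simp only [← Matrix.isStrictlyPositive_iff_posDef]
  exact exists_isStrictlyPositive_neg_star_mul_add_mul fun z hz ↦
    hA z (Matrix.mem_spectrum_iff_isRoot_charpoly.1 hz)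

theorem stmt11_general {n : Type*} [Fintype n] [DecidableEq n] (A : Matrix n n ℝ)
    (hHurwitz : ∀ μ : ℂ, (A.map (algebraMap ℝ ℂ)).charpoly.IsRoot μ → μ.re < 0) :
    ∃ P : Matrix n n ℝ,
      P.IsSymm ∧ P.PosDef ∧ (-(Aᵀ * P + P * A)).PosDef ∧
        ∀ z : n → ℝ, z ≠ 0 → z ⬝ᵥ ((Aᵀ * P + P * A).mulVec z) < 0 := by
  obtain ⟨P, hP, hlyap⟩ := exists_posDef_neg_conjTranspose_mul_add_mul hHurwitz
  have hstar : (A.map (algebraMap ℝ ℂ))ᴴ = Aᵀ.map (algebraMap ℝ ℂ) := by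
    ext i j
    simp
  have hre := posDef_map_re hlyap
  rw [hstar, Matrix.map_neg _ (map_neg _), Matrix.map_add _ (map_add _),
    map_re_map_algebraMap_mul, map_re_mul_map_algebraMap] at hre
  refine ⟨P.map RCLike.re, ?_, posDef_map_re hP, hre, fun z hz ↦ ?_⟩
  · exact (Matrix.conjTranspose_eq_transpose_of_trivial _).symm.trans (posDef_map_re hP).isHermitian
  · simpa only [Matrix.neg_mulVec, dotProduct_neg, star_trivial, neg_pos] using
      hre.dotProduct_mulVec_pos hz

/-- if all complex eigenvalues of the real matrix `A` (the roots of
its characteristic polynomial over `ℂ`) have negative real part, then there is a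
symmetric positive definite `P` with `−(AᵀP + PA)` positive definite; equivalently,
`W(z) = zᵀPz` satisfies `∇W(z)·(Az) < 0` for all `z ≠ 0`. -/
theorem stmt11 (κ : ℕ) (hκ : 1 ≤ κ) (A : Matrix (Fin κ) (Fin κ) ℝ)
    (hHurwitz : ∀ μ : ℂ,
      ((A.map (algebraMap ℝ ℂ)).charpoly).IsRoot μ → μ.re < 0) :
    ∃ P : Matrix (Fin κ) (Fin κ) ℝ,
      P.IsSymm ∧ P.PosDef ∧ (-(Aᵀ * P + P * A)).PosDef ∧
        ∀ z : Fin κ → ℝ, z ≠ 0 →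
          z ⬝ᵥ ((Aᵀ * P + P * A).mulVec z) < 0 :=
  stmt11_general A hHurwitz
end

section
/- Let λ > 0, let g : [0,∞) → [0,∞) be continuous, and let y : [0,∞) → ℝ be differentiable with y′(t) ≤ −2λ·y(t) + g(t) for all t ≥ 0. Then for all t ≥ 0: y(t) ≤ e^{−2λt} y(0) + (1/λ) · sup_{0 ≤ s ≤ t} e^{−λ(t−s)} g(s). -/
/-! Let the exponential weight absorb part of the dissipation: for fixed `t`, the function
`z s = exp (-μ * (t - s)) * y s` agrees with `y` at `t`, and `y' ≤ -(μ + ν) * y + g` turns into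
`z' ≤ -ν * z + M`, where `M` bounds the weighted forcing `exp (-μ * (t - s)) * g s`. Grönwall's
inequality with the constant forcing `M` then adds at most `M / ν` to the decaying initial value.
-/

open Set

section Gronwall

variable {y y' g : ℝ → ℝ} {a t : ℝ}

theorem le_gronwallBound_of_hasDerivWithinAt_right_le {δ K ε : ℝ}
    (hy : ContinuousOn y (Icc a t)) (hy' : ∀ s ∈ Ico a t, HasDerivWithinAt y (y' s) (Ici s) s)
    (ha : y a ≤ δ) (bound : ∀ s ∈ Ico a t, y' s ≤ K * y s + ε) :
    ∀ s ∈ Icc a t, y s ≤ gronwallBound δ K ε (s - a) :=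
  le_gronwallBound_of_liminf_deriv_right_le hy
    (fun s hs _ hr => (hy' s hs).liminf_right_slope_le hr) ha bound

theorem gronwallBound_neg_le {δ ν ε : ℝ} (hν : 0 < ν) (hε : 0 ≤ ε) (x : ℝ) :
    gronwallBound δ (-ν) ε x ≤ δ * Real.exp (-ν * x) + 1 / ν * ε := by
  have htail : 0 ≤ ε / ν * Real.exp (-ν * x) := by positivity
  rw [gronwallBound_of_K_ne_0 (neg_ne_zero.mpr hν.ne')]
  calc δ * Real.exp (-ν * x) + ε / -ν * (Real.exp (-ν * x) - 1)
      = δ * Real.exp (-ν * x) + 1 / ν * ε - ε / ν * Real.exp (-ν * x) := by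
        rw [div_neg]; ring
    _ ≤ δ * Real.exp (-ν * x) + 1 / ν * ε := sub_le_self _ htail

theorem hasDerivWithinAt_exp_neg_mul_sub_mul {S : Set ℝ} {d s : ℝ} (μ t : ℝ)
    (hy : HasDerivWithinAt y d S s) :
    HasDerivWithinAt (fun r => Real.exp (-μ * (t - r)) * y r)
      (Real.exp (-μ * (t - s)) * (μ * y s + d)) S s := by
  have hweight : HasDerivAt (fun r => Real.exp (-μ * (t - r)))
      (Real.exp (-μ * (t - s)) * μ) s := by
    simpa using (((hasDerivAt_id s).const_sub t).const_mul (-μ)).exp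
  exact (hweight.hasDerivWithinAt.mul hy).congr_deriv (by ring)

theorem le_gronwallBound_of_exp_weighted_le {μ ν M : ℝ} (hat : a ≤ t)
    (hy : ContinuousOn y (Icc a t)) (hy' : ∀ s ∈ Ico a t, HasDerivWithinAt y (y' s) (Ici s) s)
    (hineq : ∀ s ∈ Ico a t, y' s ≤ -(μ + ν) * y s + g s)
    (hM : ∀ s ∈ Ico a t, Real.exp (-μ * (t - s)) * g s ≤ M) :
    y t ≤ gronwallBound (Real.exp (-μ * (t - a)) * y a) (-ν) M (t - a) := by
  have hz_cont : ContinuousOn (fun s => Real.exp (-μ * (t - s)) * y s) (Icc a t) := by fun_prop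
  have hz_ineq : ∀ s ∈ Ico a t, Real.exp (-μ * (t - s)) * (μ * y s + y' s) ≤
      -ν * (Real.exp (-μ * (t - s)) * y s) + M := fun s hs =>
    calc Real.exp (-μ * (t - s)) * (μ * y s + y' s)
        ≤ Real.exp (-μ * (t - s)) * (μ * y s + (-(μ + ν) * y s + g s)) := by
          gcongr; exact hineq s hs
      _ = -ν * (Real.exp (-μ * (t - s)) * y s) + Real.exp (-μ * (t - s)) * g s := by ring
      _ ≤ -ν * (Real.exp (-μ * (t - s)) * y s) + M := by gcongr; exact hM s hs
  simpa only [sub_self, mul_zero, Real.exp_zero, one_mul] using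
    le_gronwallBound_of_hasDerivWithinAt_right_le hz_cont
      (fun s hs => hasDerivWithinAt_exp_neg_mul_sub_mul μ t (hy' s hs)) le_rfl hz_ineq
      t (right_mem_Icc.mpr hat)

theorem stmt12_general {μ ν s₀ : ℝ} (hν : 0 < ν)
    (hg : BddAbove ((fun s => Real.exp (-μ * (t - s)) * g s) '' Icc a t))
    (hs₀ : s₀ ∈ Icc a t) (hgs₀ : 0 ≤ g s₀)
    (hy : ContinuousOn y (Icc a t)) (hy' : ∀ s ∈ Ico a t, HasDerivWithinAt y (y' s) (Ici s) s)
    (hineq : ∀ s ∈ Ico a t, y' s ≤ -(μ + ν) * y s + g s) :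
    y t ≤ Real.exp (-(μ + ν) * (t - a)) * y a +
      (1 / ν) * sSup ((fun s => Real.exp (-μ * (t - s)) * g s) '' Icc a t) := by
  set M := sSup ((fun s => Real.exp (-μ * (t - s)) * g s) '' Icc a t)
  have hM : ∀ s ∈ Icc a t, Real.exp (-μ * (t - s)) * g s ≤ M := fun s hs =>
    le_csSup hg (mem_image_of_mem _ hs)
  have hM_nonneg : 0 ≤ M := (mul_nonneg (Real.exp_nonneg _) hgs₀).trans (hM s₀ hs₀)
  calc y t ≤ gronwallBound (Real.exp (-μ * (t - a)) * y a) (-ν) M (t - a) :=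
        le_gronwallBound_of_exp_weighted_le (hs₀.1.trans hs₀.2) hy hy' hineq
          fun s hs => hM s (Ico_subset_Icc_self hs)
    _ ≤ Real.exp (-μ * (t - a)) * y a * Real.exp (-ν * (t - a)) + 1 / ν * M :=
        gronwallBound_neg_le hν hM_nonneg (t - a)
    _ = Real.exp (-(μ + ν) * (t - a)) * y a + 1 / ν * M := by
        rw [mul_right_comm, ← Real.exp_add, ← add_mul, neg_add]

end Gronwall

/-- the fading-memory Grönwall-type estimate: if `y` is
differentiable on `[0,∞)` with `y′(t) ≤ −2λ·y(t) + g(t)` for a continuous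
nonnegative `g`, then `y(t) ≤ e^{−2λt} y(0) + (1/λ) sup_{0≤s≤t} e^{−λ(t−s)} g(s)`. -/
theorem stmt12 (lam : ℝ) (hlam : 0 < lam)
    (g : ℝ → ℝ) (hg : Continuous g) (hgnn : ∀ t, 0 ≤ t → 0 ≤ g t)
    (y : ℝ → ℝ) (hy : ∀ t, 0 ≤ t → DifferentiableAt ℝ y t)
    (hineq : ∀ t, 0 ≤ t → deriv y t ≤ -(2 * lam) * y t + g t) :
    ∀ t, 0 ≤ t →
      y t ≤ Real.exp (-(2 * lam) * t) * y 0 +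
        (1 / lam) * sSup ((fun s => Real.exp (-lam * (t - s)) * g s) ''
          Set.Icc (0 : ℝ) t) := by
  intro t ht
  simpa only [← two_mul, sub_zero] using stmt12_general (μ := lam) hlam
    (isCompact_Icc.bddAbove_image (by fun_prop)) (left_mem_Icc.mpr ht) (hgnn 0 le_rfl)
    (fun s hs => (hy s hs.1).continuousAt.continuousWithinAt)
    (fun s hs => (hy s hs.1).hasDerivAt.hasDerivWithinAt)
    (fun s hs => two_mul lam ▸ hineq s hs.1)
end
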